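/- Let q ≥ 9 and k be integers with 2 ≤ k ≤ q + 1, let T be a tournament with minimum out-degree at least (q − 1)k − 1, let Ω be a collection of k − 1 pairwise vertex-disjoint q-cycles of T, and let P be a Hamiltonian path of the subtournament T ∖ Ω. Let F₁ and F₂ be disjoint vertex sets with V(F₁) ∪ V(F₂) = V(P) such that F₂ dominates F₁, and suppose |F₁| ≤ q − 1. Let Cᵢ ∈ Ω satisfy d⁺(F₁, Cᵢ) ≥ (q − 2/q − (|F₁| − 1)/(2q))·|F₁|, and let C′ᵢ be a directed cycle of length q − 2 with V(C′ᵢ) ⊆ V(Cᵢ). Then there exist three distinct vertices z₁, z₂, z₃ ∈ V(C′ᵢ) such that d⁺(zⱼ, F₁) = 0 for each j = 1, 2, 3. -/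

import Mathlib

open Set

/-- `T` is a tournament: irreflexive, and for distinct vertices exactly one
of the two possible arcs is present. -/
def IsTournament {V : Type*} (T : V → V → Prop) : Prop :=
  (∀ x, ¬ T x x) ∧ ∀ x y, x ≠ y → (T x y ↔ ¬ T y x)

/-- `c` is a directed cycle of length `q` in the digraph `T`. -/
def IsCycle {V : Type*} (T : V → V → Prop) (q : ℕ) (c : ZMod q → V) : Prop :=
  Function.Injective c ∧ ∀ i, T (c i) (c (i + 1))

/-- The cycles in the family `C` are pairwise vertex-disjoint. -/
def DisjointCycles {V : Type*} {k q : ℕ} (C : Fin k → ZMod q → V) : Prop :=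
  ∀ j j' : Fin k, j ≠ j' → Disjoint (Set.range (C j)) (Set.range (C j'))

/-- `T` contains `k` pairwise vertex-disjoint directed cycles of length `q`. -/
def HasDisjointCycles {V : Type*} (T : V → V → Prop) (k q : ℕ) : Prop :=
  ∃ C : Fin k → ZMod q → V, (∀ j, IsCycle T q (C j)) ∧ DisjointCycles C

/-- The out-degree of a vertex `v`. -/
noncomputable def outDeg {V : Type*} (T : V → V → Prop) (v : V) : ℕ :=
  {w | T v w}.ncard

/-- `d⁺(v, Y)`: the number of out-neighbours of `v` inside the set `Y`. -/
noncomputable def outDegTo {V : Type*} (T : V → V → Prop) (v : V) (Y : Set V) : ℕ :=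
  {w ∈ Y | T v w}.ncard

/-- `d⁺(X, v)`: the number of in-neighbours of `v` inside the set `X`. -/
noncomputable def inDegFrom {V : Type*} (T : V → V → Prop) (X : Set V) (v : V) : ℕ :=
  {x ∈ X | T x v}.ncard

/-- `d⁺(X, Y)`: the number of arcs from `X` to `Y`. -/
noncomputable def arcs {V : Type*} (T : V → V → Prop) (X Y : Set V) : ℕ :=
  {p : V × V | p.1 ∈ X ∧ p.2 ∈ Y ∧ T p.1 p.2}.ncard

/-- There is an `r`-matching from `X` to `Y`: `r` arcs from `X` to `Y` that
pairwise share no endpoints. -/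
def HasMatching {V : Type*} (T : V → V → Prop) (X Y : Set V) (r : ℕ) : Prop :=
  ∃ e : Fin r → V × V,
    (∀ i, (e i).1 ∈ X ∧ (e i).2 ∈ Y ∧ T (e i).1 (e i).2) ∧
    ∀ i j, i ≠ j → (e i).1 ≠ (e j).1 ∧ (e i).2 ≠ (e j).2

/-- `u` is a Hamiltonian path of the subtournament induced on `S`, written as
`P = (u_{l} … u₂ u₁)`: the vertex `u ⟨0,_⟩` is `u₁`, and each arc goes from the
higher-indexed vertex to the next lower-indexed one. -/
def IsHamPathOn {V : Type*} (T : V → V → Prop) (S : Set V) {l : ℕ}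
    (u : Fin l → V) : Prop :=
  Function.Injective u ∧ Set.range u = S ∧
    ∀ (i : ℕ) (h : i + 1 < l), T (u ⟨i + 1, h⟩) (u ⟨i, Nat.lt_of_succ_lt h⟩)

/-!
At most half of the `q` vertices of the cycle have an out-neighbour in `F₁`: the hypothesis leaves
room for only `f (f + 3) / (2 q)` arcs from the cycle back to `F₁`, where `f = |F₁| < q`, and
`f (f + 3) < (f + 2) (f + 1) ≤ (q + 1) q`. So all but at most `q / 2` of the `q - 2` vertices of
the shorter cycle send no arc to `F₁`, and `q - 2 - ⌊q / 2⌋ ≥ 3` as soon as `q ≥ 9`.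
-/

section

variable {V : Type*} {T : V → V → Prop}

theorem IsTournament.asymm (hT : IsTournament T) ⦃x y : V⦄ (hxy : T x y) : ¬ T y x := by
  obtain rfl | hne := eq_or_ne x y
  · exact hT.1 x
  · exact (hT.2 x y hne).1 hxy

theorem IsCycle.ncard_range {q : ℕ} {c : ZMod q → V} (hc : IsCycle T q c) :
    (range c).ncard = q := by
  rw [ncard_range_of_injective hc.1, Nat.card_zmod]

theorem finite_setOf_arcs {X Y : Set V} (hX : X.Finite) (hY : Y.Finite) :
    {p : V × V | p.1 ∈ X ∧ p.2 ∈ Y ∧ T p.1 p.2}.Finite :=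
  (hX.prod hY).subset fun _ hp ↦ ⟨hp.1, hp.2.1⟩

theorem arcs_mono_left {X X' Y : Set V} (hX' : X'.Finite) (hY : Y.Finite) (h : X ⊆ X') :
    arcs T X Y ≤ arcs T X' Y :=
  ncard_le_ncard (fun _ hp ↦ ⟨h hp.1, hp.2⟩) (finite_setOf_arcs hX' hY)

theorem arcs_add_arcs_le (hT : ∀ ⦃x y⦄, T x y → ¬ T y x) {X Y : Set V} (hX : X.Finite)
    (hY : Y.Finite) : arcs T X Y + arcs T Y X ≤ X.ncard * Y.ncard := by
  let forward : Set (V × V) := {p | p.1 ∈ X ∧ p.2 ∈ Y ∧ T p.1 p.2}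
  let backward : Set (V × V) := {p | p.1 ∈ Y ∧ p.2 ∈ X ∧ T p.1 p.2}
  have hdisj : Disjoint forward (Prod.swap '' backward) := by
    rw [disjoint_left]
    rintro _ ⟨-, -, hxy⟩ ⟨_, ⟨-, -, hyx⟩, rfl⟩
    exact hT hxy hyx
  have hsub : forward ∪ Prod.swap '' backward ⊆ X ×ˢ Y := by
    rintro _ (⟨hx, hy, -⟩ | ⟨_, ⟨hy, hx, -⟩, rfl⟩) <;> exact ⟨hx, hy⟩
  calc arcs T X Y + arcs T Y X
      = forward.ncard + (Prod.swap '' backward).ncard := by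
        rw [ncard_image_of_injective _ Prod.swap_injective]; rfl
    _ = (forward ∪ Prod.swap '' backward).ncard :=
        (ncard_union_eq hdisj (finite_setOf_arcs hX hY)
          ((finite_setOf_arcs hY hX).image _)).symm
    _ ≤ (X ×ˢ Y).ncard := ncard_le_ncard hsub (hX.prod hY)
    _ = X.ncard * Y.ncard := ncard_prod

theorem ncard_le_ncard_outDegTo_eq_zero_add_arcs {X Y : Set V} (hX : X.Finite) (hY : Y.Finite) :
    X.ncard ≤ {x ∈ X | outDegTo T x Y = 0}.ncard + arcs T X Y := by
  let tails : Set V := Prod.fst '' {p : V × V | p.1 ∈ X ∧ p.2 ∈ Y ∧ T p.1 p.2}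
  have htails : tails.Finite := (finite_setOf_arcs hX hY).image _
  have hcover : X ⊆ {x ∈ X | outDegTo T x Y = 0} ∪ tails := by
    intro x hx
    by_cases h0 : outDegTo T x Y = 0
    · exact .inl ⟨hx, h0⟩
    · obtain ⟨y, hy, hxy⟩ := nonempty_of_ncard_ne_zero h0
      exact .inr ⟨(x, y), ⟨hx, hy, hxy⟩, rfl⟩
  calc X.ncard ≤ ({x ∈ X | outDegTo T x Y = 0} ∪ tails).ncard :=
        ncard_le_ncard hcover ((hX.sep _).union htails)
    _ ≤ {x ∈ X | outDegTo T x Y = 0}.ncard + tails.ncard := ncard_union_le _ _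
    _ ≤ {x ∈ X | outDegTo T x Y = 0}.ncard + arcs T X Y :=
        Nat.add_le_add_left (ncard_image_le (finite_setOf_arcs hX hY)) _

theorem le_half_of_add_le_mul {q f a b : ℕ} (hf : f < q) (hab : a + b ≤ f * q)
    (ha : ((q : ℝ) - 2 / q - ((f : ℝ) - 1) / (2 * q)) * f ≤ a) : b ≤ q / 2 := by
  have hq : (0 : ℝ) < q := by exact_mod_cast f.zero_le.trans_lt hf
  have hab' : (a : ℝ) + b ≤ f * q := by exact_mod_cast hab
  have hdeficit : ((q : ℝ) - 2 / q - ((f : ℝ) - 1) / (2 * q)) * f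
      = f * q - f * (f + 3) / (2 * q) := by
    field_simp
    ring
  have hb : (b : ℝ) * (2 * q) ≤ f * (f + 3) := by
    rw [← le_div_iff₀ (by positivity)]
    linarith
  have hbq : b * (2 * q) ≤ f * (f + 3) := by exact_mod_cast hb
  have hlt : 2 * b * q < (q + 1) * q := by
    calc 2 * b * q = b * (2 * q) := by ring
      _ ≤ f * (f + 3) := hbq
      _ < (f + 2) * (f + 1) := by linarith
      _ ≤ (q + 1) * q := Nat.mul_le_mul (by omega) hf
  have hb_lt : 2 * b < q + 1 := Nat.lt_of_mul_lt_mul_right hlt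
  omega

theorem arcs_le_half (hT : ∀ ⦃x y⦄, T x y → ¬ T y x) {q : ℕ} {F A : Set V} (hF : F.Finite)
    (hA : A.Finite) (hFq : F.ncard < q) (hAq : A.ncard ≤ q)
    (harcs : ((q : ℝ) - 2 / q - ((F.ncard : ℝ) - 1) / (2 * q)) * F.ncard ≤ arcs T F A) :
    arcs T A F ≤ q / 2 :=
  le_half_of_add_le_mul hFq
    ((arcs_add_arcs_le hT hF hA).trans (Nat.mul_le_mul_left _ hAq)) harcs

theorem stmt14_general (hT : ∀ ⦃x y⦄, T x y → ¬ T y x) {q : ℕ} {F A B : Set V} (hF : F.Finite)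
    (hA : A.Finite) (hFq : F.ncard < q) (hAq : A.ncard ≤ q)
    (harcs : ((q : ℝ) - 2 / q - ((F.ncard : ℝ) - 1) / (2 * q)) * F.ncard ≤ arcs T F A)
    (hBA : B ⊆ A) (hB : q / 2 + 2 < B.ncard) :
    ∃ z₁ ∈ B, ∃ z₂ ∈ B, ∃ z₃ ∈ B, z₁ ≠ z₂ ∧ z₁ ≠ z₃ ∧ z₂ ≠ z₃ ∧
      outDegTo T z₁ F = 0 ∧ outDegTo T z₂ F = 0 ∧ outDegTo T z₃ F = 0 := by
  have hBfin : B.Finite := hA.subset hBA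
  have hBF : arcs T B F ≤ q / 2 :=
    (arcs_mono_left hA hF hBA).trans (arcs_le_half hT hF hA hFq hAq harcs)
  have hcount : B.ncard ≤ {z ∈ B | outDegTo T z F = 0}.ncard + arcs T B F :=
    ncard_le_ncard_outDegTo_eq_zero_add_arcs hBfin hF
  obtain ⟨z₁, z₂, z₃, ⟨hz₁, h₁⟩, ⟨hz₂, h₂⟩, ⟨hz₃, h₃⟩, h₁₂, h₁₃, h₂₃⟩ :=
    (two_lt_ncard_iff (hBfin.sep _)).1 (show 2 < {z ∈ B | outDegTo T z F = 0}.ncard by omega)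
  exact ⟨z₁, hz₁, z₂, hz₂, z₃, hz₃, h₁₂, h₁₃, h₂₃, h₁, h₂, h₃⟩

end

theorem stmt14 {V : Type*} [Fintype V] (T : V → V → Prop) (hT : IsTournament T)
    (q k : ℕ) (hq : 9 ≤ q) (hk1 : 2 ≤ k) (hk2 : k ≤ q + 1)
    (hdeg : ∀ v, (q - 1) * k - 1 ≤ outDeg T v)
    (C : Fin (k - 1) → ZMod q → V) (hC : ∀ j, IsCycle T q (C j))
    (hdisj : DisjointCycles C)
    (l : ℕ) (u : Fin l → V) (hP : IsHamPathOn T ((⋃ j, Set.range (C j))ᶜ) u)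
    (F₁ F₂ : Set V) (hF : Disjoint F₁ F₂) (hFU : F₁ ∪ F₂ = Set.range u)
    (hdom : ∀ x ∈ F₂, ∀ y ∈ F₁, T x y)
    (hF1 : F₁.ncard ≤ q - 1)
    (i : Fin (k - 1))
    (hi : ((q : ℝ) - 2 / (q : ℝ) - ((F₁.ncard : ℝ) - 1) / (2 * (q : ℝ))) * (F₁.ncard : ℝ)
        ≤ (arcs T F₁ (Set.range (C i)) : ℝ))
    (c' : ZMod (q - 2) → V) (hc' : IsCycle T (q - 2) c')
    (hsub : Set.range c' ⊆ Set.range (C i)) :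
    ∃ z₁ ∈ Set.range c', ∃ z₂ ∈ Set.range c', ∃ z₃ ∈ Set.range c',
      z₁ ≠ z₂ ∧ z₁ ≠ z₃ ∧ z₂ ≠ z₃ ∧
      outDegTo T z₁ F₁ = 0 ∧ outDegTo T z₂ F₁ = 0 ∧ outDegTo T z₃ F₁ = 0 :=
  stmt14_general hT.asymm F₁.toFinite (toFinite _) (by omega) (hC i).ncard_range.le hi hsub
    (by rw [hc'.ncard_range]; omega)
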